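/- arXiv:1609.08188 — 2 statements merged into one kernel-verified Lean document; each statement's English description precedes it below -/
import Mathlib

section
/- Let q ≥ 2 and let Θ be the linear map on V_[A] determined by Θ(A_{σ,σ·τ}) = Σ_{σ̂∈N_τ∩C_σ} A_{σ̂,iσ̂·τ} − Σ_{σ̂∈N_τ∩N_σ} A_{σ̂,iσ̂·τ} for τ ∈ σ_q and σ ∈ C_τ. Then Θ intertwines the two-copy representation: Θ(φ⊗²(U)x) = φ⊗²(U)Θ(x) for every U ∈ 𝒩_q and every x ∈ V_[A]. -/
open Matrix MeasureTheory
open scoped Kronecker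

noncomputable section

namespace CliffordPaper

/-- The single-qubit Pauli matrices `1, X, Y, Z`. -/
def pauli1 : Fin 4 → Matrix (Fin 2) (Fin 2) ℂ :=
  ![1, !![0, 1; 1, 0], !![0, -Complex.I; Complex.I, 0], !![1, 0; 0, -1]]

/-- Index type for the computational basis of `q` qubits. -/
abbrev Idx (q : ℕ) := Fin q → Fin 2

/-- The space `M_d` of `d × d` complex matrices, `d = 2^q`. -/
abbrev Mat (q : ℕ) := Matrix (Idx q) (Idx q) ℂ

/-- The space `M_d ⊗ M_d`, realized as matrices indexed by the product index set
(the tensor factors combine via the Kronecker product `⊗ₖ`). -/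
abbrev BMat (q : ℕ) := Matrix (Idx q × Idx q) (Idx q × Idx q) ℂ

/-- The `q`-fold Kronecker product of single-qubit Paulis with labels `a`. -/
def PauliOp {q : ℕ} (a : Fin q → Fin 4) : Mat q :=
  Matrix.of fun x y => ∏ i, pauli1 (a i) (x i) (y i)

/-- `√d` as a complex number, where `d = 2^q`. -/
def sqrtd (q : ℕ) : ℂ := (Real.sqrt (2 ^ q) : ℝ)

/-- The set `σ̂_q` of normalized Pauli operators. -/
def sigmaHat (q : ℕ) : Set (Mat q) :=
  {M | ∃ a : Fin q → Fin 4, M = (sqrtd q)⁻¹ • PauliOp a}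

/-- The normalized identity `σ₀ = 1/√d`. -/
def sigma0 (q : ℕ) : Mat q := (sqrtd q)⁻¹ • (1 : Mat q)

/-- `σ_q = σ̂_q \ {σ₀}`. -/
def sigmaSet (q : ℕ) : Set (Mat q) := sigmaHat q \ {sigma0 q}

/-- `N_τ`: the normalized nonidentity Paulis anticommuting with `τ`. -/
def NSet {q : ℕ} (τ : Mat q) : Set (Mat q) :=
  {σ | σ ∈ sigmaSet q ∧ σ * τ + τ * σ = 0}

/-- `C_τ`: the normalized nonidentity Paulis distinct from `τ` commuting with `τ`. -/
def CSet {q : ℕ} (τ : Mat q) : Set (Mat q) :=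
  {σ | σ ∈ sigmaSet q ∧ σ ≠ τ ∧ σ * τ = τ * σ}

/-- `Ĉ_τ`: the normalized Paulis commuting with `τ`. -/
def CHatSet {q : ℕ} (τ : Mat q) : Set (Mat q) :=
  {σ | σ ∈ sigmaHat q ∧ σ * τ = τ * σ}

/-- The normalized product `σ·τ = √d στ`. -/
def nprod {q : ℕ} (σ τ : Mat q) : Mat q := sqrtd q • (σ * τ)

/-- The Clifford normalizer `𝒩_q`: unitaries mapping normalized Paulis to
signed normalized Paulis under conjugation. -/
def Cliff (q : ℕ) : Set (Mat q) :=
  {U | U ∈ Matrix.unitaryGroup (Idx q) ℂ ∧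
    ∀ σ ∈ sigmaHat q, ∃ τ ∈ sigmaHat q, U * σ * Uᴴ = τ ∨ U * σ * Uᴴ = -τ}

/-- The two-copy representation `φ⊗²(U) : A ⊗ B ↦ (UAU†) ⊗ (UBU†)`, extended linearly. -/
def twoCopy {q : ℕ} (U : Mat q) : BMat q →ₗ[ℂ] BMat q where
  toFun M := (U ⊗ₖ U) * M * (U ⊗ₖ U)ᴴ
  map_add' M N := by
    show (U ⊗ₖ U) * (M + N) * (U ⊗ₖ U)ᴴ = (U ⊗ₖ U) * M * (U ⊗ₖ U)ᴴ + (U ⊗ₖ U) * N * (U ⊗ₖ U)ᴴ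
    rw [Matrix.mul_add, Matrix.add_mul]
  map_smul' c M := by
    show (U ⊗ₖ U) * (c • M) * (U ⊗ₖ U)ᴴ = c • ((U ⊗ₖ U) * M * (U ⊗ₖ U)ᴴ)
    rw [Matrix.mul_smul, Matrix.smul_mul]

/-- The Hilbert–Schmidt inner product `⟨A, B⟩ = tr(A† B)`. -/
def hs {q : ℕ} (A B : BMat q) : ℂ := (Aᴴ * B).trace

/-- A subspace is invariant under the two-copy representation of `𝒩_q`. -/
def IsInvariant (q : ℕ) (W : Submodule ℂ (BMat q)) : Prop :=
  ∀ U ∈ Cliff q, ∀ v ∈ W, twoCopy U v ∈ W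

/-- A nonzero invariant subspace carries an irreducible subrepresentation. -/
def CarriesIrred (q : ℕ) (W : Submodule ℂ (BMat q)) : Prop :=
  W ≠ ⊥ ∧ IsInvariant q W ∧ ∀ W' ≤ W, IsInvariant q W' → W' = ⊥ ∨ W' = W

/-- Two invariant subspaces carry equivalent subrepresentations: there is a linear
isomorphism between them intertwining the two-copy representation. -/
def EquivRep (q : ℕ) (W W' : Submodule ℂ (BMat q)) : Prop :=
  ∃ T : BMat q →ₗ[ℂ] BMat q, Submodule.map T W = W' ∧
    (∀ x ∈ W, T x = 0 → x = 0) ∧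
    ∀ U ∈ Cliff q, ∀ x ∈ W, T (twoCopy U x) = twoCopy U (T x)

/-- `S_{σ,τ} = (σ⊗τ + τ⊗σ)/√2`. -/
def SVec {q : ℕ} (σ τ : Mat q) : BMat q :=
  ((Real.sqrt 2 : ℂ))⁻¹ • (σ ⊗ₖ τ + τ ⊗ₖ σ)

/-- `A_{σ,τ} = (σ⊗τ − τ⊗σ)/√2`. -/
def AVec {q : ℕ} (σ τ : Mat q) : BMat q :=
  ((Real.sqrt 2 : ℂ))⁻¹ • (σ ⊗ₖ τ - τ ⊗ₖ σ)

/-- The trivial sector `V_id`. -/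
def Vid (q : ℕ) : Submodule ℂ (BMat q) :=
  Submodule.span ℂ {sigma0 q ⊗ₖ sigma0 q}

/-- The right adjoint sector `V_r`. -/
def Vr (q : ℕ) : Submodule ℂ (BMat q) :=
  Submodule.span ℂ {M | ∃ τ ∈ sigmaSet q, M = sigma0 q ⊗ₖ τ}

/-- The left adjoint sector `V_l`. -/
def Vl (q : ℕ) : Submodule ℂ (BMat q) :=
  Submodule.span ℂ {M | ∃ τ ∈ sigmaSet q, M = τ ⊗ₖ sigma0 q}

/-- The diagonal sector `V_d`. -/
def Vdiag (q : ℕ) : Submodule ℂ (BMat q) :=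
  Submodule.span ℂ {M | ∃ τ ∈ sigmaSet q, M = τ ⊗ₖ τ}

/-- The symmetric commuting sector `V_[S]`. -/
def VScom (q : ℕ) : Submodule ℂ (BMat q) :=
  Submodule.span ℂ {M | ∃ τ ∈ sigmaSet q, ∃ σ ∈ CSet τ, M = SVec σ τ}

/-- The symmetric anti-commuting sector `V_{S}`. -/
def VSanti (q : ℕ) : Submodule ℂ (BMat q) :=
  Submodule.span ℂ {M | ∃ τ ∈ sigmaSet q, ∃ σ ∈ NSet τ, M = SVec σ τ}

/-- The antisymmetric commuting sector `V_[A]`. -/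
def VAcom (q : ℕ) : Submodule ℂ (BMat q) :=
  Submodule.span ℂ {M | ∃ τ ∈ sigmaSet q, ∃ σ ∈ CSet τ, M = AVec σ τ}

/-- The antisymmetric anti-commuting sector `V_{A}`. -/
def VAanti (q : ℕ) : Submodule ℂ (BMat q) :=
  Submodule.span ℂ {M | ∃ τ ∈ sigmaSet q, ∃ σ ∈ NSet τ, M = AVec σ τ}

/-- `V_[A]` presented with the spanning vectors `A_{σ,σ·τ}`, `σ ∈ C_τ`. -/
def VAcom' (q : ℕ) : Submodule ℂ (BMat q) :=
  Submodule.span ℂ {M | ∃ τ ∈ sigmaSet q, ∃ σ ∈ CSet τ, M = AVec σ (nprod σ τ)}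

/-- `V_0 = span{Σ_{σ∈σ_q} σ⊗σ}`. -/
def V0diag (q : ℕ) : Submodule ℂ (BMat q) :=
  Submodule.span ℂ {∑ᶠ σ ∈ sigmaSet q, σ ⊗ₖ σ}

/-- `V_1`, the "positive" part of the diagonal sector. -/
def V1diag (q : ℕ) : Submodule ℂ (BMat q) :=
  Submodule.span ℂ {v | ∃ lam : Mat q → ℂ,
    v = ∑ᶠ σ ∈ sigmaSet q, lam σ • (σ ⊗ₖ σ) ∧
    (∑ᶠ σ ∈ sigmaSet q, lam σ) = 0 ∧
    ∀ τ ∈ sigmaSet q, (∑ᶠ σ ∈ NSet τ, lam σ) = -((2 ^ q : ℂ) / 2) * lam τ}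

/-- `V_2`, the "negative" part of the diagonal sector. -/
def V2diag (q : ℕ) : Submodule ℂ (BMat q) :=
  Submodule.span ℂ {v | ∃ lam : Mat q → ℂ,
    v = ∑ᶠ σ ∈ sigmaSet q, lam σ • (σ ⊗ₖ σ) ∧
    (∑ᶠ σ ∈ sigmaSet q, lam σ) = 0 ∧
    ∀ τ ∈ sigmaSet q, (∑ᶠ σ ∈ NSet τ, lam σ) = ((2 ^ q : ℂ) / 2) * lam τ}

/-- `v^[adj]_τ = (2|C_τ|)^{-1/2} Σ_{σ∈C_τ} S_{σ,σ·τ}`. -/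
def vadjS {q : ℕ} (τ : Mat q) : BMat q :=
  ((Real.sqrt (2 * ((CSet τ).ncard : ℝ)) : ℂ))⁻¹ • ∑ᶠ σ ∈ CSet τ, SVec σ (nprod σ τ)

/-- `v^{adj}_τ = (2|N_τ|)^{-1/2} Σ_{σ∈N_τ} A_{σ,iσ·τ}`. -/
def vadjA {q : ℕ} (τ : Mat q) : BMat q :=
  ((Real.sqrt (2 * ((NSet τ).ncard : ℝ)) : ℂ))⁻¹ •
    ∑ᶠ σ ∈ NSet τ, AVec σ (Complex.I • nprod σ τ)

/-- The symmetric adjoint sector `V_[adj]`. -/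
def VadjS (q : ℕ) : Submodule ℂ (BMat q) :=
  Submodule.span ℂ {M | ∃ τ ∈ sigmaSet q, M = vadjS τ}

/-- The antisymmetric adjoint sector `V_{adj}`. -/
def VadjA (q : ℕ) : Submodule ℂ (BMat q) :=
  Submodule.span ℂ {M | ∃ τ ∈ sigmaSet q, M = vadjA τ}

/-- The orthogonal complement `V^⊥_{adj}` of `V_{adj}` inside `V_{A}`. -/
def VadjAperp (q : ℕ) : Submodule ℂ (BMat q) :=
  Submodule.span ℂ {v | v ∈ VAanti q ∧ ∀ w ∈ VadjA q, hs w v = 0}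

/-- `V_{1}^τ`. -/
def V1symτ (q : ℕ) (τ : Mat q) : Submodule ℂ (BMat q) :=
  Submodule.span ℂ {v | ∃ lam : Mat q → ℂ,
    v = ∑ᶠ σ ∈ NSet τ, lam σ • SVec σ (Complex.I • nprod σ τ) ∧
    ∀ ν ∈ NSet τ, (∑ᶠ σ ∈ NSet τ ∩ CSet ν, lam σ) - (∑ᶠ σ ∈ NSet τ ∩ NSet ν, lam σ)
      = ((2 ^ q : ℂ) / 2) * lam ν}

/-- `V_{2}^τ`. -/
def V2symτ (q : ℕ) (τ : Mat q) : Submodule ℂ (BMat q) :=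
  Submodule.span ℂ {v | ∃ lam : Mat q → ℂ,
    v = ∑ᶠ σ ∈ NSet τ, lam σ • SVec σ (Complex.I • nprod σ τ) ∧
    ∀ ν ∈ NSet τ, (∑ᶠ σ ∈ NSet τ ∩ CSet ν, lam σ) - (∑ᶠ σ ∈ NSet τ ∩ NSet ν, lam σ)
      = -((2 ^ q : ℂ) / 2) * lam ν}

/-- `V_{1} = ⊕_τ V_{1}^τ`. -/
def V1sym (q : ℕ) : Submodule ℂ (BMat q) := ⨆ τ ∈ sigmaSet q, V1symτ q τ

/-- `V_{2} = ⊕_τ V_{2}^τ`. -/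
def V2sym (q : ℕ) : Submodule ℂ (BMat q) := ⨆ τ ∈ sigmaSet q, V2symτ q τ

/-- The defining property of the map `Θ` on `V_[A]`. -/
def ThetaProp (q : ℕ) (Θ : BMat q →ₗ[ℂ] BMat q) : Prop :=
  ∀ τ ∈ sigmaSet q, ∀ σ ∈ CSet τ,
    Θ (AVec σ (nprod σ τ)) =
      (∑ᶠ σ' ∈ NSet τ ∩ CSet σ, AVec σ' (Complex.I • nprod σ' τ)) -
      ∑ᶠ σ' ∈ NSet τ ∩ NSet σ, AVec σ' (Complex.I • nprod σ' τ)

/-- `V` = span of off-diagonal products `σ⊗σ̂`, `σ ≠ σ̂`. -/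
def Voff (q : ℕ) : Submodule ℂ (BMat q) :=
  Submodule.span ℂ {M | ∃ σ ∈ sigmaSet q, ∃ σ' ∈ sigmaSet q, σ ≠ σ' ∧ M = σ ⊗ₖ σ'}

/-- `V^τ` = span of the `σ⊗σ̂` with `σ·σ̂ ∈ {τ, −τ, iτ, −iτ}`. -/
def Vtau (q : ℕ) (τ : Mat q) : Submodule ℂ (BMat q) :=
  Submodule.span ℂ {M | ∃ σ ∈ sigmaSet q, ∃ σ' ∈ sigmaSet q,
    (nprod σ σ' = τ ∨ nprod σ σ' = -τ ∨ nprod σ σ' = Complex.I • τ ∨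
      nprod σ σ' = -(Complex.I • τ)) ∧ M = σ ⊗ₖ σ'}


lemma pauli1_trace (a b : Fin 4) :
    ∑ x, ∑ y, pauli1 a x y * pauli1 b y x = if a = b then 2 else 0 := by
  fin_cases a <;> fin_cases b <;>
    simp [pauli1, Fin.sum_univ_two, Matrix.one_apply] <;> norm_num

lemma PauliOp_trace {q : ℕ} (a b : Fin q → Fin 4) :
    (PauliOp a * PauliOp b).trace = ∏ i, (if a i = b i then (2 : ℂ) else 0) := by
  simp only [Matrix.trace, Matrix.diag, Matrix.mul_apply, PauliOp, Matrix.of_apply,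
    ← Finset.prod_mul_distrib]
  simp_rw [← pauli1_trace, Finset.prod_univ_sum, Fintype.piFinset_univ]

lemma sqrtd_ne (q : ℕ) : sqrtd q ≠ 0 := by
  unfold sqrtd
  have : Real.sqrt (2 ^ q) ≠ 0 := by positivity
  exact_mod_cast this

lemma neg_not_mem {q : ℕ} {σ σ' : Mat q} (h : σ ∈ sigmaHat q) (h' : σ' ∈ sigmaHat q) :
    σ ≠ -σ' := by
  obtain ⟨a, rfl⟩ := h
  obtain ⟨b, rfl⟩ := h'
  intro e
  rw [← smul_neg] at e
  have e2 := smul_right_injective _ (inv_ne_zero (sqrtd_ne q)) e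
  have e3 : (PauliOp a * PauliOp a).trace = -(PauliOp a * PauliOp b).trace := by
    conv_lhs => rw [e2]
    rw [e2]; simp [Matrix.trace_neg]
  rw [PauliOp_trace, PauliOp_trace] at e3
  have h1 : (∏ i : Fin q, (if a i = a i then (2 : ℂ) else 0)) = ((2 ^ q : ℝ) : ℂ) := by simp
  have h2 : (∏ i : Fin q, (if a i = b i then (2 : ℂ) else 0))
      = ((∏ i : Fin q, (if a i = b i then (2 : ℝ) else 0) : ℝ) : ℂ) := by
    push_cast
    refine Finset.prod_congr rfl fun i _ => ?_
    split_ifs <;> simp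
  rw [h1, h2] at e3
  have e4 : (2 ^ q : ℝ) = -(∏ i : Fin q, (if a i = b i then (2 : ℝ) else 0)) := by
    exact_mod_cast e3
  have h3 : 0 ≤ ∏ i : Fin q, (if a i = b i then (2 : ℝ) else 0) :=
    Finset.prod_nonneg fun i _ => by split_ifs <;> norm_num
  have h4 : (0 : ℝ) < 2 ^ q := by positivity
  linarith

lemma eq_of_sign {q : ℕ} {σ σ' : Mat q} (h : σ ∈ sigmaHat q) (h' : σ' ∈ sigmaHat q)
    {s : ℂ} (hs : s = 1 ∨ s = -1) (e : σ = s • σ') : σ = σ' := by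
  rcases hs with rfl | rfl
  · simpa using e
  · exact absurd (by simpa using e) (neg_not_mem h h')

lemma sigma0_mem (q : ℕ) : sigma0 q ∈ sigmaHat q := by
  refine ⟨fun _ => 0, ?_⟩
  unfold sigma0
  congr 1
  ext x y
  simp only [PauliOp, pauli1, Matrix.of_apply, Matrix.cons_val_zero, Matrix.one_apply,
    Finset.prod_ite_zero, Finset.mem_univ, true_imp_iff, Finset.prod_const_one, funext_iff]

lemma sigmaHat_finite (q : ℕ) : (sigmaHat q).Finite := by
  have : sigmaHat q = Set.range fun a : Fin q → Fin 4 => (sqrtd q)⁻¹ • PauliOp a := by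
    ext M; simp [sigmaHat, eq_comm]
  rw [this]; exact Set.finite_range _

/-- conjugation by `U` -/
def cj {q : ℕ} (U M : Mat q) : Mat q := U * M * Uᴴ

section
variable {q : ℕ} {U : Mat q}

lemma cj_smul (c : ℂ) (A : Mat q) : cj U (c • A) = c • cj U A := by simp [cj]

lemma cj_add (A B : Mat q) : cj U (A + B) = cj U A + cj U B := by
  simp [cj, Matrix.mul_add, Matrix.add_mul]

lemma cj_mul (hU : Uᴴ * U = 1) (A B : Mat q) : cj U (A * B) = cj U A * cj U B := by
  simp only [cj, Matrix.mul_assoc]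
  rw [← Matrix.mul_assoc Uᴴ U, hU, Matrix.one_mul]

lemma cj_inj (hU : Uᴴ * U = 1) : Function.Injective (cj U) := by
  intro A B h
  have : Uᴴ * cj U A * U = Uᴴ * cj U B * U := by rw [h]
  have key : ∀ A : Mat q, Uᴴ * cj U A * U = A := fun A => by
    simp only [cj, Matrix.mul_assoc]
    rw [hU, ← Matrix.mul_assoc, hU]; simp
  rwa [key, key] at this

lemma twoCopy_AVec (A B : Mat q) : twoCopy U (AVec A B) = AVec (cj U A) (cj U B) := by
  unfold AVec
  rw [map_smul, map_sub]
  simp only [twoCopy, LinearMap.coe_mk, AddHom.coe_mk, cj, Matrix.conjTranspose_kronecker,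
    ← Matrix.mul_kronecker_mul]

lemma AVec_sign {s : ℂ} (hs : s = 1 ∨ s = -1) (t c : ℂ) (A B : Mat q) :
    AVec (s • A) (c • nprod (s • A) (t • B)) = t • AVec A (c • nprod A B) := by
  unfold AVec nprod
  simp only [Matrix.smul_mul, Matrix.mul_smul, Matrix.smul_kronecker, Matrix.kronecker_smul]
  rcases hs with rfl | rfl <;> module

lemma cj_nprod (hU : Uᴴ * U = 1) (A B : Mat q) :
    cj U (nprod A B) = nprod (cj U A) (cj U B) := by
  simp [nprod, cj_smul, cj_mul hU]

/-- `f` is the unsigned action of `U` on normalized Paulis. -/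
def Good (U : Mat q) (f : Mat q → Mat q) : Prop :=
  ∀ σ ∈ sigmaHat q, f σ ∈ sigmaHat q ∧ ∃ s : ℂ, (s = 1 ∨ s = -1) ∧ cj U σ = s • f σ

lemma exists_good (hU : U ∈ Cliff q) : ∃ f, Good U f := by
  have : ∀ σ : Mat q, ∃ τ, σ ∈ sigmaHat q →
      τ ∈ sigmaHat q ∧ ∃ s : ℂ, (s = 1 ∨ s = -1) ∧ cj U σ = s • τ := by
    intro σ
    by_cases h : σ ∈ sigmaHat q
    · obtain ⟨τ, hτ, h1 | h1⟩ := hU.2 σ h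
      · exact ⟨τ, fun _ => ⟨hτ, 1, Or.inl rfl, by simpa [cj] using h1⟩⟩
      · exact ⟨τ, fun _ => ⟨hτ, -1, Or.inr rfl, by simpa [cj] using h1⟩⟩
    · exact ⟨0, fun h' => absurd h' h⟩
  choose f hf using this
  exact ⟨f, fun σ h => hf σ h⟩

lemma good_inj (hU : Uᴴ * U = 1) {f} (hf : Good U f) : Set.InjOn f (sigmaHat q) := by
  intro a ha b hb h
  obtain ⟨_, s, hs, e⟩ := hf a ha
  obtain ⟨_, t, ht, e'⟩ := hf b hb
  have htt : t * t = 1 := by rcases ht with rfl | rfl <;> simp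
  have : cj U a = cj U ((s * t) • b) := by
    rw [cj_smul, e', e, h, smul_smul, mul_assoc, htt, mul_one]
  refine eq_of_sign ha hb (s := s * t) ?_ (cj_inj hU this)
  rcases hs with rfl | rfl <;> rcases ht with rfl | rfl <;> simp

lemma good_surj (hU : Uᴴ * U = 1) {f} (hf : Good U f) :
    Set.SurjOn f (sigmaHat q) (sigmaHat q) :=
  (Set.Finite.surjOn_iff_bijOn_of_mapsTo (sigmaHat_finite q) fun a ha => (hf a ha).1).2
    ⟨fun a ha => (hf a ha).1, good_inj hU hf,
      (Set.Finite.injOn_iff_bijOn_of_mapsTo (sigmaHat_finite q) fun a ha => (hf a ha).1).1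
        (good_inj hU hf) |>.surjOn⟩

lemma good_sigma0 (hU : Uᴴ * U = 1) {f} (hf : Good U f) : f (sigma0 q) = sigma0 q := by
  obtain ⟨h, s, hs, e⟩ := hf _ (sigma0_mem q)
  have h0 : cj U (sigma0 q) = sigma0 q := by
    have : U * Uᴴ = 1 := mul_eq_one_comm.1 hU
    simp [sigma0, cj, this]
  rw [h0] at e
  exact (eq_of_sign (sigma0_mem q) h hs e).symm

lemma good_sigmaSet (hU : Uᴴ * U = 1) {f} (hf : Good U f) {σ : Mat q} (h : σ ∈ sigmaHat q) :
    f σ ∈ sigmaSet q ↔ σ ∈ sigmaSet q := by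
  have : f σ = sigma0 q ↔ σ = sigma0 q := by
    constructor
    · intro e
      exact good_inj hU hf h (sigma0_mem q) (e.trans (good_sigma0 hU hf).symm)
    · rintro rfl; exact good_sigma0 hU hf
  simp [sigmaSet, h, (hf σ h).1, this]

lemma good_anti (hU : Uᴴ * U = 1) {f} (hf : Good U f) {σ τ : Mat q} (h : σ ∈ sigmaHat q)
    (hτ : τ ∈ sigmaHat q) (c : ℂ) :
    f σ * f τ + c • (f τ * f σ) = 0 ↔ σ * τ + c • (τ * σ) = 0 := by
  obtain ⟨_, s, hs, e⟩ := hf σ h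
  obtain ⟨_, t, ht, e'⟩ := hf τ hτ
  have hne : s * t ≠ 0 := by
    rcases hs with rfl | rfl <;> rcases ht with rfl | rfl <;> simp
  have h0 : cj U (0 : Mat q) = 0 := by simp [cj]
  rw [← (cj_inj hU).eq_iff (a := σ * τ + c • (τ * σ)), h0, cj_add, cj_smul, cj_mul hU, cj_mul hU, e, e']
  have : (s • f σ) * (t • f τ) + c • ((t • f τ) * (s • f σ))
      = (s * t) • (f σ * f τ + c • (f τ * f σ)) := by
    simp only [Matrix.smul_mul, Matrix.mul_smul, smul_smul, smul_add]
    congr 2 <;> ring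
  rw [this, smul_eq_zero]
  simp [hne]

lemma good_NSet (hU : Uᴴ * U = 1) {f} (hf : Good U f) {σ τ : Mat q} (h : σ ∈ sigmaHat q)
    (hτ : τ ∈ sigmaHat q) : f σ ∈ NSet (f τ) ↔ σ ∈ NSet τ := by
  have := good_anti hU hf h hτ 1
  simp only [one_smul] at this
  simp only [NSet, Set.mem_ofPred_eq, good_sigmaSet hU hf h, this]

lemma good_CSet (hU : Uᴴ * U = 1) {f} (hf : Good U f) {σ τ : Mat q} (h : σ ∈ sigmaHat q)
    (hτ : τ ∈ sigmaHat q) : f σ ∈ CSet (f τ) ↔ σ ∈ CSet τ := by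
  have := good_anti hU hf h hτ (-1)
  simp only [neg_smul, one_smul, ← sub_eq_add_neg, sub_eq_zero] at this
  simp only [CSet, Set.mem_ofPred_eq, good_sigmaSet hU hf h, this, ne_eq,
    (good_inj hU hf).eq_iff h hτ]

lemma good_sum (hU : Uᴴ * U = 1) {f} (hf : Good U f) {τ : Mat q} {t : ℂ}
    (hτ : cj U τ = t • f τ) (S S' : Set (Mat q)) (hS : S ⊆ sigmaHat q) (hS' : S' ⊆ sigmaHat q)
    (hSS : ∀ σ ∈ sigmaHat q, f σ ∈ S' ↔ σ ∈ S) :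
    twoCopy U (∑ᶠ σ ∈ S, AVec σ (Complex.I • nprod σ τ))
      = t • ∑ᶠ σ ∈ S', AVec σ (Complex.I • nprod σ (f τ)) := by
  have hfin : S.Finite := (sigmaHat_finite q).subset hS
  have hfin' : S'.Finite := (sigmaHat_finite q).subset hS'
  rw [smul_finsum_mem hfin']
  have e1 := (twoCopy U).toAddMonoidHom.map_finsum_mem
    (fun σ => AVec σ (Complex.I • nprod σ τ)) hfin
  refine e1.trans ?_
  refine finsum_mem_eq_of_bijOn f ⟨fun a ha => (hSS a (hS ha)).2 ha,
    (good_inj hU hf).mono hS, ?_⟩ ?_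
  · intro b hb
    obtain ⟨a, ha, rfl⟩ := good_surj hU hf (hS' hb)
    exact ⟨a, (hSS a ha).1 hb, rfl⟩
  · intro a ha
    obtain ⟨_, s, hs, e⟩ := hf a (hS ha)
    change twoCopy U _ = _
    rw [twoCopy_AVec, cj_smul, cj_nprod hU, e, hτ, AVec_sign hs]

end

/-- `Θ` intertwines the two-copy representation on `V_[A]`. -/
theorem statement10 (q : ℕ) (hq : 2 ≤ q)
    (Θ : BMat q →ₗ[ℂ] BMat q) (hΘ : ThetaProp q Θ) :
    ∀ U ∈ Cliff q, ∀ x ∈ VAcom' q, Θ (twoCopy U x) = twoCopy U (Θ x) := by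
  intro U hUC x hx
  have hU : Uᴴ * U = 1 := Matrix.mem_unitaryGroup_iff'.1 hUC.1
  obtain ⟨f, hf⟩ := exists_good hUC
  refine Submodule.span_induction (p := fun x _ => Θ (twoCopy U x) = twoCopy U (Θ x))
    ?_ ?_ ?_ ?_ hx
  · rintro _ ⟨τ, hτ, σ, hσ, rfl⟩
    have hσ' := hσ.1.1
    obtain ⟨_, s, hs, e⟩ := hf σ hσ'
    obtain ⟨_, t, ht, e'⟩ := hf τ hτ.1
    have h1 : twoCopy U (AVec σ (nprod σ τ)) = t • AVec (f σ) (nprod (f σ) (f τ)) := by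
      have := AVec_sign hs t 1 (f σ) (f τ)
      simp only [one_smul] at this
      rw [twoCopy_AVec, cj_nprod hU, e, e', this]
    have hNs : ∀ τ : Mat q, NSet τ ⊆ sigmaHat q := fun τ a ha => ha.1.1
    rw [h1, map_smul, hΘ (f τ) ((good_sigmaSet hU hf hτ.1).2 hτ) (f σ)
      ((good_CSet hU hf hσ' hτ.1).2 hσ), hΘ τ hτ σ hσ, map_sub, smul_sub]
    congr 1
    · refine (good_sum hU hf e' _ _ (Set.inter_subset_left.trans (hNs _))
        (Set.inter_subset_left.trans (hNs _)) fun a ha => ?_).symm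
      simp only [Set.mem_inter_iff, good_NSet hU hf ha hτ.1, good_CSet hU hf ha hσ']
    · refine (good_sum hU hf e' _ _ (Set.inter_subset_left.trans (hNs _))
        (Set.inter_subset_left.trans (hNs _)) fun a ha => ?_).symm
      simp only [Set.mem_inter_iff, good_NSet hU hf ha hτ.1, good_NSet hU hf ha hσ']
  · simp
  · intro x y _ _ hx hy
    simp only [map_add, hx, hy]
  · intro c x _ hx
    simp only [map_smul, hx]

end CliffordPaper
end
end

section
/- Fix τ ∈ σ_q and let 𝒩_q^τ = {U ∈ 𝒩_q : UτU† = ±τ}. Suppose W^τ ⊆ V^τ satisfies φ⊗²(U)W^τ ⊆ W^τ for all U ∈ 𝒩_q^τ. Then: (i) whenever U₁, U₂ ∈ 𝒩_q satisfy U₁τU₁† = ±U₂τU₂†, one has φ⊗²(U₁)W^τ = φ⊗²(U₂)W^τ; (ii) for every τ′ ∈ σ_q there exists U ∈ 𝒩_q with UτU† = ±τ′, and the subspace W^{τ′} := φ⊗²(U)W^τ ⊆ V^{τ′} is independent of the choice of such U; (iii) the subspace W := ⊕_{τ′∈σ_q} W^{τ′} satisfies φ⊗²(U)W ⊆ W for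 all U ∈ 𝒩_q. -/
open Matrix MeasureTheory
open scoped Kronecker

noncomputable section

namespace CliffordPaper

/-! ### Helper lemmas -/

/-- Tensor product of single-qubit matrices. -/
def tens {q : ℕ} (f : Fin q → Matrix (Fin 2) (Fin 2) ℂ) : Mat q :=
  Matrix.of fun x y => ∏ i, f i (x i) (y i)

lemma pauliOp_eq_tens {q : ℕ} (a : Fin q → Fin 4) : PauliOp a = tens fun i => pauli1 (a i) := rfl

lemma tens_mul {q : ℕ} (f g : Fin q → Matrix (Fin 2) (Fin 2) ℂ) :
    tens f * tens g = tens fun i => f i * g i := by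
  ext x y
  simp only [tens, Matrix.mul_apply, Matrix.of_apply]
  rw [Finset.prod_univ_sum, Fintype.piFinset_univ]
  simp only [Finset.prod_mul_distrib]

lemma tens_smul {q : ℕ} (c : Fin q → ℂ) (f : Fin q → Matrix (Fin 2) (Fin 2) ℂ) :
    (tens fun i => c i • f i) = (∏ i, c i) • tens f := by
  ext x y
  simp [tens, Finset.prod_mul_distrib]

lemma tens_one {q : ℕ} : (tens fun _ : Fin q => (1 : Matrix (Fin 2) (Fin 2) ℂ)) = 1 := by
  ext x y
  simp only [tens, Matrix.of_apply, Matrix.one_apply, Finset.prod_ite_zero]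
  simp [funext_iff]

lemma tens_herm {q : ℕ} (f : Fin q → Matrix (Fin 2) (Fin 2) ℂ) :
    (tens f)ᴴ = tens fun i => (f i)ᴴ := by
  ext x y
  simp [tens, Matrix.conjTranspose_apply]

lemma pauli1_herm (x : Fin 4) : (pauli1 x)ᴴ = pauli1 x := by
  fin_cases x <;> ext i j <;> fin_cases i <;> fin_cases j <;> simp [pauli1]

lemma pauli1_sq (x : Fin 4) : pauli1 x * pauli1 x = 1 := by
  fin_cases x <;> ext i j <;> fin_cases i <;> fin_cases j <;> simp [pauli1, Matrix.mul_apply]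

/-- product label -/
def mlab : Fin 4 → Fin 4 → Fin 4 :=
  ![![0, 1, 2, 3], ![1, 0, 3, 2], ![2, 3, 0, 1], ![3, 2, 1, 0]]

/-- product phase -/
def mph : Fin 4 → Fin 4 → ℂ :=
  ![![1, 1, 1, 1], ![1, 1, Complex.I, -Complex.I], ![1, -Complex.I, 1, Complex.I],
    ![1, Complex.I, -Complex.I, 1]]

lemma pauli1_mul (x y : Fin 4) : pauli1 x * pauli1 y = mph x y • pauli1 (mlab x y) := by
  fin_cases x <;> fin_cases y <;> ext i j <;> fin_cases i <;> fin_cases j <;>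
    simp [pauli1, mph, mlab, Matrix.mul_apply]

/-- commutation sign -/
def csgn (x y : Fin 4) : ℤ := if x = 0 ∨ y = 0 ∨ x = y then 1 else -1

lemma csgn_cases (x y : Fin 4) : csgn x y = 1 ∨ csgn x y = -1 := by
  unfold csgn; split_ifs <;> simp

lemma pauli1_comm (x y : Fin 4) :
    pauli1 x * pauli1 y = (csgn x y : ℂ) • (pauli1 y * pauli1 x) := by
  rw [pauli1_mul, pauli1_mul, smul_smul]
  fin_cases x <;> fin_cases y <;> simp [mph, mlab, csgn]

lemma csgn_zero_left (y : Fin 4) : csgn 0 y = 1 := by simp [csgn]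
lemma csgn_zero_right (y : Fin 4) : csgn y 0 = 1 := by simp [csgn]

lemma exists_anti (x y : Fin 4) (hx : x ≠ 0) (hy : y ≠ 0) :
    ∃ z, csgn z x = -1 ∧ csgn z y = -1 := by
  revert x y; decide

lemma pauliOp_mul {q : ℕ} (a b : Fin q → Fin 4) :
    PauliOp a * PauliOp b = (∏ i, mph (a i) (b i)) • PauliOp fun i => mlab (a i) (b i) := by
  simp only [pauliOp_eq_tens, tens_mul, pauli1_mul, tens_smul]

lemma pauliOp_herm {q : ℕ} (a : Fin q → Fin 4) : (PauliOp a)ᴴ = PauliOp a := by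
  simp only [pauliOp_eq_tens, tens_herm, pauli1_herm]

lemma pauliOp_sq {q : ℕ} (a : Fin q → Fin 4) : PauliOp a * PauliOp a = 1 := by
  simp only [pauliOp_eq_tens, tens_mul, pauli1_sq, tens_one]

lemma pauliOp_zero {q : ℕ} : PauliOp (fun _ : Fin q => 0) = 1 := by
  rw [pauliOp_eq_tens, ← tens_one]; rfl

lemma pauliOp_comm {q : ℕ} (a b : Fin q → Fin 4) :
    PauliOp a * PauliOp b = ((∏ i, csgn (a i) (b i) : ℤ) : ℂ) • (PauliOp b * PauliOp a) := by
  simp only [pauliOp_eq_tens, tens_mul]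
  rw [Int.cast_prod, ← tens_smul]
  simp only [← pauli1_comm]

lemma csgn_prod_cases {q : ℕ} (a b : Fin q → Fin 4) :
    (∏ i, csgn (a i) (b i)) = 1 ∨ (∏ i, csgn (a i) (b i)) = -1 := by
  refine Finset.prod_induction (fun i => csgn (a i) (b i)) (fun x => x = 1 ∨ x = -1) ?_ ?_ ?_
  · rintro x y (rfl | rfl) (rfl | rfl) <;> simp
  · simp
  · intro i _; exact csgn_cases _ _

lemma pauliOp_comm_cases {q : ℕ} (a b : Fin q → Fin 4) :
    PauliOp a * PauliOp b = PauliOp b * PauliOp a ∨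
    PauliOp a * PauliOp b = -(PauliOp b * PauliOp a) := by
  rcases csgn_prod_cases a b with h | h
  · left; rw [pauliOp_comm, h]; simp
  · right; rw [pauliOp_comm, h]; simp

lemma pauliOp_ne_zero {q : ℕ} (a : Fin q → Fin 4) : PauliOp a ≠ 0 := by
  intro h
  have := pauliOp_sq a
  rw [h, mul_zero] at this
  exact zero_ne_one this

lemma pauliOp_ne_neg_one {q : ℕ} (a : Fin q → Fin 4) : PauliOp a ≠ -1 := by
  intro h
  have h1 := congrFun (congrFun h (fun _ => 0)) (fun _ => 0)
  simp only [PauliOp, Matrix.of_apply, Matrix.neg_apply, Matrix.one_apply_eq] at h1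
  have h2 : (∏ i, pauli1 (a i) 0 0) = 0 ∨ (∏ i, pauli1 (a i) 0 0) = 1 := by
    refine Finset.prod_induction (fun i => pauli1 (a i) 0 0) (fun x => x = 0 ∨ x = 1) ?_ ?_ ?_
    · rintro x y (rfl | rfl) (rfl | rfl) <;> simp
    · simp
    · intro i _
      generalize a i = x
      fin_cases x <;> simp [pauli1]
  rcases h2 with h2 | h2 <;> rw [h2] at h1 <;> norm_num at h1

lemma mph_pow (x y : Fin 4) : mph x y ^ 4 = 1 := by
  have hI : (-Complex.I) ^ 4 = 1 := by rw [neg_pow, Complex.I_pow_four]; norm_num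
  fin_cases x <;> fin_cases y <;> simp [mph, hI]

/-- A Hermitian phase multiple of a Pauli is a signed Pauli. -/
lemma herm_sign {q : ℕ} (M : Mat q) (hM : Mᴴ = M) (c : ℂ) (hc : c ^ 4 = 1) (a : Fin q → Fin 4)
    (h : M = c • PauliOp a) : M = PauliOp a ∨ M = -PauliOp a := by
  have h1 : (star c - c) • PauliOp a = 0 := by
    rw [sub_smul, ← h, sub_eq_zero, ← hM, h, Matrix.conjTranspose_smul, pauliOp_herm]
  have h2 : star c = c := by
    rcases smul_eq_zero.1 h1 with h1 | h1
    · exact sub_eq_zero.1 h1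
    · exact absurd h1 (pauliOp_ne_zero a)
  obtain ⟨r, rfl⟩ := Complex.conj_eq_iff_real.1 h2
  have h3 : r ^ 4 = 1 := by exact_mod_cast hc
  have h4 : (r - 1) * (r + 1) = 0 := by nlinarith [sq_nonneg r]
  rcases mul_eq_zero.1 h4 with h4 | h4
  · have : r = 1 := by linarith
    left; rw [h, this]; simp
  · have : r = -1 := by linarith
    right; rw [h, this]; simp

lemma pauli_triple {q : ℕ} (a b c : Fin q → Fin 4)
    (hM : (PauliOp a * PauliOp b * PauliOp c)ᴴ = PauliOp a * PauliOp b * PauliOp c) :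
    ∃ e, PauliOp a * PauliOp b * PauliOp c = PauliOp e ∨
      PauliOp a * PauliOp b * PauliOp c = -PauliOp e := by
  refine ⟨_, herm_sign _ hM ((∏ i, mph (a i) (b i)) * ∏ i, mph (mlab (a i) (b i)) (c i)) ?_
    (fun i => mlab (mlab (a i) (b i)) (c i)) ?_⟩
  · rw [mul_pow, ← Finset.prod_pow, ← Finset.prod_pow]
    simp [mph_pow]
  · rw [pauliOp_mul, Matrix.smul_mul, pauliOp_mul, smul_smul]

lemma csgn_prod_single {q : ℕ} (r a : Fin q → Fin 4) (i : Fin q) (hi : csgn (r i) (a i) = -1)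
    (h : ∀ k, k ≠ i → csgn (r k) (a k) = 1) : (∏ k, csgn (r k) (a k)) = -1 := by
  rw [Finset.prod_eq_single i (fun k _ hk => h k hk) (by simp), hi]

lemma exists_common_anti {q : ℕ} (a b : Fin q → Fin 4) (ha : a ≠ fun _ => 0)
    (hb : b ≠ fun _ => 0) :
    ∃ r : Fin q → Fin 4, (∏ k, csgn (r k) (a k)) = -1 ∧ (∏ k, csgn (r k) (b k)) = -1 := by
  by_cases h : ∃ i, a i ≠ 0 ∧ b i ≠ 0
  · obtain ⟨i, h1, h2⟩ := h
    obtain ⟨z, hz1, hz2⟩ := exists_anti _ _ h1 h2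
    refine ⟨fun k => if k = i then z else 0, csgn_prod_single _ _ i ?_ ?_,
      csgn_prod_single _ _ i ?_ ?_⟩
    · simpa using hz1
    · intro k hk; simp [hk, csgn_zero_left]
    · simpa using hz2
    · intro k hk; simp [hk, csgn_zero_left]
  · push Not at h
    obtain ⟨i, hi⟩ := Function.ne_iff.1 ha
    obtain ⟨j, hj⟩ := Function.ne_iff.1 hb
    have hbi := h i hi
    have haj : a j = 0 := by
      by_contra h'; exact hj (h j h')
    have hij : i ≠ j := by rintro rfl; exact hi haj
    obtain ⟨z, hz, -⟩ := exists_anti _ _ hi hi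
    obtain ⟨w, hw, -⟩ := exists_anti _ _ hj hj
    refine ⟨fun k => if k = i then z else if k = j then w else 0, csgn_prod_single _ _ i ?_ ?_,
      csgn_prod_single _ _ j ?_ ?_⟩
    · simpa using hz
    · intro k hk
      by_cases hkj : k = j
      · subst hkj; simp [haj, csgn_zero_right]
      · simp [hk, hkj, csgn_zero_left]
    · simpa [hij.symm] using hw
    · intro k hk
      by_cases hki : k = i
      · subst hki; simp [hbi, csgn_zero_right]
      · simp [hk, hki, csgn_zero_left]

/-- unitarity extraction -/
lemma cliff_mul_herm {q : ℕ} {U : Mat q} (hU : U ∈ Cliff q) : U * Uᴴ = 1 :=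
  Matrix.mem_unitaryGroup_iff.1 hU.1

lemma cliff_herm_mul {q : ℕ} {U : Mat q} (hU : U ∈ Cliff q) : Uᴴ * U = 1 :=
  Matrix.mem_unitaryGroup_iff'.1 hU.1

lemma conj_mul {q : ℕ} (U V σ : Mat q) : (U * V) * σ * (U * V)ᴴ = U * (V * σ * Vᴴ) * Uᴴ := by
  rw [Matrix.conjTranspose_mul]; simp only [Matrix.mul_assoc]

lemma conj_cancel {q : ℕ} {U : Mat q} (h : Uᴴ * U = 1) (σ : Mat q) :
    Uᴴ * (U * σ * Uᴴ) * U = σ := by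
  calc Uᴴ * (U * σ * Uᴴ) * U = (Uᴴ * U) * σ * (Uᴴ * U) := by simp only [Matrix.mul_assoc]
    _ = σ := by rw [h]; simp

lemma conj_neg' {q : ℕ} (U σ V : Mat q) : U * (-σ) * V = -(U * σ * V) := by simp

lemma cliff_mul {q : ℕ} {U V : Mat q} (hU : U ∈ Cliff q) (hV : V ∈ Cliff q) :
    U * V ∈ Cliff q := by
  refine ⟨mul_mem hU.1 hV.1, fun σ hσ => ?_⟩
  obtain ⟨τ, hτ, h⟩ := hV.2 σ hσ
  obtain ⟨ρ, hρ, h'⟩ := hU.2 τ hτ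
  refine ⟨ρ, hρ, ?_⟩
  rw [conj_mul]
  rcases h with h | h <;> rcases h' with h' | h' <;> rw [h] <;> simp [h']

lemma cliff_inv {q : ℕ} {U : Mat q} (hU : U ∈ Cliff q) : Uᴴ ∈ Cliff q := by
  have hu := cliff_herm_mul hU
  refine ⟨Matrix.mem_unitaryGroup_iff.2 (by
    rw [Matrix.star_eq_conjTranspose, Matrix.conjTranspose_conjTranspose]; exact hu), fun σ hσ => ?_⟩
  let S : Set (Mat q) := sigmaHat q ∪ Set.image Neg.neg (sigmaHat q)
  have hS : S.Finite := (sigmaHat_finite q).union ((sigmaHat_finite q).image _)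
  have hmap : Set.MapsTo (fun σ => U * σ * Uᴴ) S S := by
    rintro s (hs | ⟨s, hs, rfl⟩)
    · obtain ⟨t, ht, h | h⟩ := hU.2 s hs
      · left; simpa [h] using ht
      · right; exact ⟨t, ht, h.symm⟩
    · obtain ⟨t, ht, h | h⟩ := hU.2 s hs
      · right; exact ⟨t, ht, by simp [h]⟩
      · left; simpa [h] using ht
  have hinj : Set.InjOn (fun σ => U * σ * Uᴴ) S := by
    intro s _ t _ hst
    have := congrArg (fun M => Uᴴ * M * U) hst
    simpa only [conj_cancel hu] using this
  have hsurj : Set.SurjOn (fun σ => U * σ * Uᴴ) S S :=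
    ((hS.injOn_iff_bijOn_of_mapsTo hmap).1 hinj).surjOn
  obtain ⟨s, hs, hsσ⟩ := hsurj (Or.inl hσ : σ ∈ S)
  have h2 : Uᴴ * σ * Uᴴᴴ = s := by
    rw [← hsσ, Matrix.conjTranspose_conjTranspose]; exact conj_cancel hu s
  rcases hs with hs | ⟨s, hs, rfl⟩
  · exact ⟨s, hs, Or.inl h2⟩
  · exact ⟨s, hs, Or.inr h2⟩

lemma cliff_sigmaSet {q : ℕ} {U : Mat q} (hU : U ∈ Cliff q) {σ : Mat q} (hσ : σ ∈ sigmaSet q) :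
    ∃ τ ∈ sigmaSet q, U * σ * Uᴴ = τ ∨ U * σ * Uᴴ = -τ := by
  obtain ⟨τ, hτ, h⟩ := hU.2 σ hσ.1
  refine ⟨τ, ⟨hτ, ?_⟩, h⟩
  intro h0
  have h0 : τ = sigma0 q := h0
  have hu := cliff_herm_mul hU
  have hs0 : Uᴴ * sigma0 q * U = sigma0 q := by simp [sigma0, hu]
  have hcc := conj_cancel hu σ
  rcases h with h | h
  · rw [h, h0, hs0] at hcc
    exact hσ.2 hcc.symm
  · rw [h, h0, conj_neg', hs0] at hcc
    obtain ⟨a, ha⟩ := hσ.1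
    apply pauliOp_ne_neg_one a
    have h1 : (sqrtd q)⁻¹ • PauliOp a = (sqrtd q)⁻¹ • (-1 : Mat q) := by
      rw [← ha, ← hcc, sigma0, smul_neg]
    exact smul_right_injective _ (inv_ne_zero (sqrtd_ne q)) h1

lemma twoCopy_mul {q : ℕ} (U V : Mat q) (M : BMat q) :
    twoCopy (U * V) M = twoCopy U (twoCopy V M) := by
  show ((U * V) ⊗ₖ (U * V)) * M * ((U * V) ⊗ₖ (U * V))ᴴ =
    (U ⊗ₖ U) * ((V ⊗ₖ V) * M * (V ⊗ₖ V)ᴴ) * (U ⊗ₖ U)ᴴ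
  rw [Matrix.mul_kronecker_mul, Matrix.conjTranspose_mul]
  simp only [Matrix.mul_assoc]

lemma twoCopy_kron {q : ℕ} (U A B : Mat q) :
    twoCopy U (A ⊗ₖ B) = (U * A * Uᴴ) ⊗ₖ (U * B * Uᴴ) := by
  show (U ⊗ₖ U) * (A ⊗ₖ B) * (U ⊗ₖ U)ᴴ = _
  rw [Matrix.conjTranspose_kronecker, Matrix.mul_kronecker_mul, Matrix.mul_kronecker_mul]

lemma nprod_conj {q : ℕ} {U : Mat q} (h : Uᴴ * U = 1) (A B : Mat q) :
    nprod (U * A * Uᴴ) (U * B * Uᴴ) = U * nprod A B * Uᴴ := by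
  have : U * A * Uᴴ * (U * B * Uᴴ) = U * (A * B) * Uᴴ := by
    calc _ = U * A * (Uᴴ * U) * B * Uᴴ := by simp only [Matrix.mul_assoc]
      _ = _ := by rw [h]; simp only [Matrix.mul_assoc, Matrix.one_mul]
  simp [nprod, this]

lemma nprod_neg_left {q : ℕ} (A B : Mat q) : nprod (-A) B = -nprod A B := by simp [nprod]
lemma nprod_neg_right {q : ℕ} (A B : Mat q) : nprod A (-B) = -nprod A B := by simp [nprod]

/-- being a fourth-root-of-unity phase multiple -/
def Ph {q : ℕ} (M τ : Mat q) : Prop :=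
  M = τ ∨ M = -τ ∨ M = Complex.I • τ ∨ M = -(Complex.I • τ)

lemma Ph.neg {q : ℕ} {M τ : Mat q} (h : Ph M τ) : Ph (-M) τ := by
  rcases h with h | h | h | h <;> simp [Ph, h]

lemma Ph.neg_right {q : ℕ} {M τ : Mat q} (h : Ph M (-τ)) : Ph M τ := by
  rcases h with h | h | h | h <;> simp [Ph, h]

lemma Ph.conj {q : ℕ} {M τ : Mat q} (U : Mat q) (h : Ph M τ) : Ph (U * M * Uᴴ) (U * τ * Uᴴ) := by
  rcases h with h | h | h | h <;> simp [Ph, h]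

lemma map_Vtau {q : ℕ} {U : Mat q} (hU : U ∈ Cliff q) {τ τ' : Mat q}
    (h : U * τ * Uᴴ = τ' ∨ U * τ * Uᴴ = -τ') :
    Submodule.map (twoCopy U) (Vtau q τ) ≤ Vtau q τ' := by
  rw [Vtau, Submodule.map_span_le]
  rintro M ⟨σ, hσ, σ', hσ', hp, rfl⟩
  rw [twoCopy_kron]
  have hp : Ph (nprod σ σ') τ := hp
  have hp2 : Ph (nprod (U * σ * Uᴴ) (U * σ' * Uᴴ)) τ' := by
    rw [nprod_conj (cliff_herm_mul hU)]
    have := hp.conj U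
    rcases h with h | h
    · rwa [h] at this
    · rw [h] at this; exact this.neg_right
  obtain ⟨ρ, hρ, h1⟩ := cliff_sigmaSet hU hσ
  obtain ⟨ρ', hρ', h2⟩ := cliff_sigmaSet hU hσ'
  have hp3 : Ph (nprod ρ ρ') τ' := by
    rcases h1 with h1 | h1 <;> rcases h2 with h2 | h2 <;> rw [h1, h2] at hp2 <;>
      try simp only [nprod_neg_left, nprod_neg_right, neg_neg] at hp2
    · exact hp2
    · simpa using hp2.neg
    · simpa using hp2.neg
    · exact hp2
  have hm : ρ ⊗ₖ ρ' ∈ Vtau q τ' := Submodule.subset_span ⟨ρ, hρ, ρ', hρ', hp3, rfl⟩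
  have hn1 : ∀ A B : Mat q, (-A) ⊗ₖ B = -(A ⊗ₖ B) := by
    intro A B; ext; simp [Matrix.kroneckerMap_apply]
  have hn2 : ∀ A B : Mat q, A ⊗ₖ (-B) = -(A ⊗ₖ B) := by
    intro A B; ext; simp [Matrix.kroneckerMap_apply]
  rcases h1 with h1 | h1 <;> rcases h2 with h2 | h2 <;> rw [h1, h2] <;>
    try simp only [hn1, hn2, neg_neg]
  · exact hm
  · exact neg_mem hm
  · exact neg_mem hm
  · exact hm

/-- `(P+Q)/√2` for anticommuting Paulis. -/
def rot {q : ℕ} (P Q : Mat q) : Mat q := ((Real.sqrt 2 : ℝ) : ℂ)⁻¹ • (P + Q)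

lemma rot_conj {q : ℕ} (a b : Fin q → Fin 4) (M : Mat q) :
    rot (PauliOp a) (PauliOp b) * M * (rot (PauliOp a) (PauliOp b))ᴴ =
      (2 : ℂ)⁻¹ • ((PauliOp a + PauliOp b) * M * (PauliOp a + PauliOp b)) := by
  have h2 : (((Real.sqrt 2 : ℝ) : ℂ)⁻¹) * (((Real.sqrt 2 : ℝ) : ℂ)⁻¹) = 2⁻¹ := by
    rw [← mul_inv, ← Complex.ofReal_mul, Real.mul_self_sqrt (by norm_num)]; norm_num
  rw [rot, Matrix.conjTranspose_smul, Matrix.conjTranspose_add, pauliOp_herm, pauliOp_herm]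
  simp only [Matrix.smul_mul, Matrix.mul_smul, smul_smul]
  rw [star_inv₀, Complex.star_def, Complex.conj_ofReal, h2]

lemma half_add {q : ℕ} (M : Mat q) : (2 : ℂ)⁻¹ • (M + M) = M := by
  rw [← two_smul ℂ M, smul_smul]; norm_num

lemma rot_expand {q : ℕ} {P Q R : Mat q} (hP : P * P = 1) (hQ : Q * Q = 1)
    (hPQ : P * Q = -(Q * P)) (s t : ℂ) (hs : P * R = s • (R * P)) (ht : Q * R = t • (R * Q)) :
    (P + Q) * R * (P + Q) = (s + t) • R + (s - t) • (R * P * Q) := by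
  have h1 : P * R * P = s • R := by rw [hs, Matrix.smul_mul, Matrix.mul_assoc, hP, Matrix.mul_one]
  have h2 : Q * R * Q = t • R := by rw [ht, Matrix.smul_mul, Matrix.mul_assoc, hQ, Matrix.mul_one]
  have h3 : P * R * Q = s • (R * P * Q) := by rw [hs, Matrix.smul_mul]
  have h4 : Q * R * P = -(t • (R * P * Q)) := by
    rw [ht, Matrix.smul_mul, Matrix.mul_assoc, Matrix.mul_assoc, hPQ, Matrix.mul_neg, smul_neg,
      neg_neg]
  rw [Matrix.add_mul, Matrix.add_mul, Matrix.mul_add, Matrix.mul_add, h1, h2, h3, h4]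
  module

lemma rot_map {q : ℕ} (a b : Fin q → Fin 4)
    (hab : PauliOp a * PauliOp b = -(PauliOp b * PauliOp a)) :
    rot (PauliOp a) (PauliOp b) * PauliOp a * (rot (PauliOp a) (PauliOp b))ᴴ = PauliOp b := by
  rw [rot_conj, rot_expand (pauliOp_sq a) (pauliOp_sq b) hab 1 (-1) (by simp)
    (by rw [hab]; simp), pauliOp_sq, Matrix.one_mul, ← half_add (PauliOp b)]
  module

lemma rot_cliff {q : ℕ} (a b : Fin q → Fin 4)
    (hab : PauliOp a * PauliOp b = -(PauliOp b * PauliOp a)) :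
    rot (PauliOp a) (PauliOp b) ∈ Cliff q := by
  constructor
  · rw [Matrix.mem_unitaryGroup_iff]
    have h := rot_conj a b 1
    rw [rot_expand (pauliOp_sq a) (pauliOp_sq b) hab 1 1 (by simp) (by simp), Matrix.mul_one] at h
    rw [Matrix.star_eq_conjTranspose, h]
    module
  · rintro σ ⟨c, rfl⟩
    have key : ∃ e, rot (PauliOp a) (PauliOp b) * PauliOp c * (rot (PauliOp a) (PauliOp b))ᴴ
        = PauliOp e ∨ rot (PauliOp a) (PauliOp b) * PauliOp c * (rot (PauliOp a) (PauliOp b))ᴴ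
        = -PauliOp e := by
      rw [rot_conj]
      have hherm : ((2 : ℂ)⁻¹ • ((PauliOp a + PauliOp b) * PauliOp c * (PauliOp a + PauliOp b)))ᴴ
          = (2 : ℂ)⁻¹ • ((PauliOp a + PauliOp b) * PauliOp c * (PauliOp a + PauliOp b)) := by
        simp [Matrix.conjTranspose_smul, Matrix.conjTranspose_mul, Matrix.conjTranspose_add,
          pauliOp_herm, Matrix.mul_assoc]
      rcases pauliOp_comm_cases a c with h1 | h1 <;> rcases pauliOp_comm_cases b c with h2 | h2
      · refine ⟨c, Or.inl ?_⟩
        rw [rot_expand (pauliOp_sq a) (pauliOp_sq b) hab 1 1 (by simpa using h1) (by simpa using h2)]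
        module
      · have h := rot_expand (pauliOp_sq a) (pauliOp_sq b) hab 1 (-1) (R := PauliOp c)
          (by simpa using h1) (by simpa using h2)
        have h' : (2 : ℂ)⁻¹ • ((PauliOp a + PauliOp b) * PauliOp c * (PauliOp a + PauliOp b)) =
            PauliOp c * PauliOp a * PauliOp b := by rw [h]; module
        rw [h'] at hherm ⊢
        exact pauli_triple _ _ _ hherm
      · have h := rot_expand (pauliOp_sq a) (pauliOp_sq b) hab (-1) 1 (R := PauliOp c)
          (by simpa using h1) (by simpa using h2)
        have h' : (2 : ℂ)⁻¹ • ((PauliOp a + PauliOp b) * PauliOp c * (PauliOp a + PauliOp b)) =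
            -(PauliOp c * PauliOp a * PauliOp b) := by rw [h]; module
        rw [h'] at hherm ⊢
        rw [Matrix.conjTranspose_neg, neg_inj] at hherm
        obtain ⟨e, he | he⟩ := pauli_triple _ _ _ hherm
        · exact ⟨e, Or.inr (by rw [he])⟩
        · exact ⟨e, Or.inl (by rw [he, neg_neg])⟩
      · refine ⟨c, Or.inr ?_⟩
        rw [rot_expand (pauliOp_sq a) (pauliOp_sq b) hab (-1) (-1) (by simpa using h1)
          (by simpa using h2)]
        module
    obtain ⟨e, he⟩ := key
    refine ⟨_, ⟨e, rfl⟩, ?_⟩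
    rw [Matrix.mul_smul, Matrix.smul_mul]
    rcases he with he | he
    · left; rw [he]
    · right; rw [he, smul_neg]

lemma cliff_trans {q : ℕ} {τ τ' : Mat q} (hτ : τ ∈ sigmaSet q) (hτ' : τ' ∈ sigmaSet q) :
    ∃ U ∈ Cliff q, U * τ * Uᴴ = τ' := by
  obtain ⟨⟨a, rfl⟩, ha⟩ := hτ
  obtain ⟨⟨b, rfl⟩, hb⟩ := hτ'
  have ha' : a ≠ fun _ => 0 := by
    rintro rfl; apply ha; show _ = _; rw [pauliOp_zero, sigma0]
  have hb' : b ≠ fun _ => 0 := by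
    rintro rfl; apply hb; show _ = _; rw [pauliOp_zero, sigma0]
  obtain ⟨r, h1, h2⟩ := exists_common_anti a b ha' hb'
  have hra : PauliOp r * PauliOp a = -(PauliOp a * PauliOp r) := by
    rw [pauliOp_comm, h1]; simp
  have har : PauliOp a * PauliOp r = -(PauliOp r * PauliOp a) := by rw [hra, neg_neg]
  have hrb : PauliOp r * PauliOp b = -(PauliOp b * PauliOp r) := by
    rw [pauliOp_comm, h2]; simp
  refine ⟨_, cliff_mul (rot_cliff r b hrb) (rot_cliff a r har), ?_⟩
  rw [conj_mul]
  simp only [Matrix.mul_smul, Matrix.smul_mul]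
  rw [rot_map a r har, rot_map r b hrb]

lemma map_le_of_same {q : ℕ} {τ : Mat q} {W : Submodule ℂ (BMat q)}
    (hWinv : ∀ U ∈ Cliff q, (U * τ * Uᴴ = τ ∨ U * τ * Uᴴ = -τ) →
      ∀ v ∈ W, twoCopy U v ∈ W) {U₁ U₂ : Mat q} (h₁ : U₁ ∈ Cliff q) (h₂ : U₂ ∈ Cliff q)
    (h : U₁ * τ * U₁ᴴ = U₂ * τ * U₂ᴴ ∨ U₁ * τ * U₁ᴴ = -(U₂ * τ * U₂ᴴ)) :
    Submodule.map (twoCopy U₁) W ≤ Submodule.map (twoCopy U₂) W := by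
  rintro _ ⟨v, hv, rfl⟩
  refine ⟨twoCopy (U₂ᴴ * U₁) v, hWinv _ (cliff_mul (cliff_inv h₂) h₁) ?_ v hv, ?_⟩
  · have hc := conj_cancel (cliff_herm_mul h₂) τ
    rw [conj_mul, Matrix.conjTranspose_conjTranspose]
    rcases h with h | h
    · left; rw [h, hc]
    · right; rw [h, conj_neg', hc]
  · rw [← twoCopy_mul, ← Matrix.mul_assoc, cliff_mul_herm h₂, Matrix.one_mul]

lemma map_eq_of_same {q : ℕ} {τ : Mat q} {W : Submodule ℂ (BMat q)}
    (hWinv : ∀ U ∈ Cliff q, (U * τ * Uᴴ = τ ∨ U * τ * Uᴴ = -τ) →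
      ∀ v ∈ W, twoCopy U v ∈ W) {U₁ U₂ : Mat q} (h₁ : U₁ ∈ Cliff q) (h₂ : U₂ ∈ Cliff q)
    (h : U₁ * τ * U₁ᴴ = U₂ * τ * U₂ᴴ ∨ U₁ * τ * U₁ᴴ = -(U₂ * τ * U₂ᴴ)) :
    Submodule.map (twoCopy U₁) W = Submodule.map (twoCopy U₂) W := by
  refine le_antisymm (map_le_of_same hWinv h₁ h₂ h) (map_le_of_same hWinv h₂ h₁ ?_)
  rcases h with h | h
  · left; exact h.symm
  · right; rw [h, neg_neg]

/-- space reduction: from a `𝒩_q^τ`-invariant subspace `W^τ ⊆ V^τ`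
one obtains well-defined translated spaces `W^{τ′} ⊆ V^{τ′}` whose direct sum is
invariant under the full two-copy representation. -/
theorem statement13 (q : ℕ) (hq : 1 ≤ q) (τ : Mat q) (hτ : τ ∈ sigmaSet q)
    (W : Submodule ℂ (BMat q)) (hW : W ≤ Vtau q τ)
    (hWinv : ∀ U ∈ Cliff q, (U * τ * Uᴴ = τ ∨ U * τ * Uᴴ = -τ) →
      ∀ v ∈ W, twoCopy U v ∈ W) :
    (∀ U₁ ∈ Cliff q, ∀ U₂ ∈ Cliff q,
      (U₁ * τ * U₁ᴴ = U₂ * τ * U₂ᴴ ∨ U₁ * τ * U₁ᴴ = -(U₂ * τ * U₂ᴴ)) →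
      Submodule.map (twoCopy U₁) W = Submodule.map (twoCopy U₂) W) ∧
    (∀ τ' ∈ sigmaSet q, ∃ U ∈ Cliff q,
      (U * τ * Uᴴ = τ' ∨ U * τ * Uᴴ = -τ') ∧
      Submodule.map (twoCopy U) W ≤ Vtau q τ') ∧
    (∀ W' : Mat q → Submodule ℂ (BMat q),
      (∀ τ' ∈ sigmaSet q, ∃ U ∈ Cliff q,
        (U * τ * Uᴴ = τ' ∨ U * τ * Uᴴ = -τ') ∧
        W' τ' = Submodule.map (twoCopy U) W) →
      IsInvariant q (⨆ τ' ∈ sigmaSet q, W' τ')) := by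
  refine ⟨fun U₁ h₁ U₂ h₂ h => map_eq_of_same hWinv h₁ h₂ h, ?_, ?_⟩
  · intro τ' hτ'
    obtain ⟨U, hU, h⟩ := cliff_trans hτ hτ'
    exact ⟨U, hU, Or.inl h, (Submodule.map_mono hW).trans (map_Vtau hU (Or.inl h))⟩
  · intro W' hW' U hU
    suffices hle : (⨆ τ' ∈ sigmaSet q, W' τ') ≤
        Submodule.comap (twoCopy U) (⨆ τ' ∈ sigmaSet q, W' τ') from fun v hv => hle hv
    refine iSup₂_le fun τ' hτ' => ?_
    rw [← Submodule.map_le_iff_le_comap]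
    obtain ⟨τ'', hτ'', h⟩ := cliff_sigmaSet hU hτ'
    obtain ⟨U₁, hU₁, h₁, e₁⟩ := hW' τ' hτ'
    obtain ⟨U₂, hU₂, h₂, e₂⟩ := hW' τ'' hτ''
    have hE : Submodule.map (twoCopy U) (W' τ') ≤ W' τ'' := by
      rw [e₁, e₂]
      have hs : (U * U₁) * τ * (U * U₁)ᴴ = U₂ * τ * U₂ᴴ ∨
          (U * U₁) * τ * (U * U₁)ᴴ = -(U₂ * τ * U₂ᴴ) := by
        rw [conj_mul]
        rcases h₁ with h₁ | h₁ <;> rcases h₂ with h₂ | h₂ <;> rcases h with h | h <;>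
          rw [h₁, h₂] <;> simp [h]
      rw [← map_eq_of_same hWinv (cliff_mul hU hU₁) hU₂ hs]
      rintro _ ⟨_, ⟨v, hv, rfl⟩, rfl⟩
      exact ⟨v, hv, twoCopy_mul _ _ _⟩
    exact hE.trans (le_iSup₂_of_le τ'' hτ'' le_rfl)

end CliffordPaper
end
end
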